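/- For every quasi-poset P on [n] there exists a unique polynomial ehr^str_P ∈ ℚ[X] such that for every integer k ≥ 0, ehr^str_P(k) equals the number of functions f : Fin n → Fin k such that i ≤_P j implies f(i) ≤ f(j), and such that i ≤_P j together with f(i) = f(j) implies i ~_P j. Moreover, if n ≥ 1, then ehr^str_P(X) = Σ_{i=1}^{n} #W^str_P(i) · H_i(X), where H_i(X) = X(X-1)⋯(X-i+1)/i! is the i-th Hilbert (binomial coefficient) polynomial. -/

import Mathlib

open Polynomial

/-- Number of strictly monotone maps `Fin n → Fin k` (the set `L^str_P(k)`). -/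
noncomputable def LstrCount {n : ℕ} (le : Fin n → Fin n → Prop) (k : ℕ) : ℕ :=
  Nat.card {f : Fin n → Fin k //
    (∀ i j, le i j → f i ≤ f j) ∧ (∀ i j, le i j → f i = f j → le j i)}

/-- Number of surjective elements of `L^str_P(k)` (the set `W^str_P(k)`). -/
noncomputable def WstrCount {n : ℕ} (le : Fin n → Fin n → Prop) (k : ℕ) : ℕ :=
  Nat.card {f : Fin n → Fin k //
    Function.Surjective f ∧ (∀ i j, le i j → f i ≤ f j) ∧
    (∀ i j, le i j → f i = f j → le j i)}

/-- The `i`-th Hilbert polynomial `H_i(X) = X(X-1)⋯(X-i+1)/i!`. -/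
noncomputable def Hilb (i : ℕ) : ℚ[X] :=
  Polynomial.C ((i.factorial : ℚ)⁻¹) * descPochhammer ℚ i

/-!
A map `f` is determined by its image `S` and the surjection onto `S` it induces. Strictness of `f`
only depends on this surjection, after identifying `S` with `Fin #S` by the order isomorphism.
Sorting the strict maps to `Fin k` by the size `i` of the image thus gives
`#L^str(k) = Σ_i (k choose i) #W^str(i)`, and `(k choose i) = H_i(k)` is polynomial in `k`.
Uniqueness holds because a polynomial is determined by its values at the natural numbers.
-/

variable {α β γ : Type*}

/-- The maps counted by `L^str`, for an arbitrary relation `r` and an arbitrary ordered target;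
this is the predicate cutting out `LstrCount` and `WstrCount`. -/
def IsStrictHom [LE β] (r : α → α → Prop) (f : α → β) : Prop :=
  (∀ i j, r i j → f i ≤ f j) ∧ (∀ i j, r i j → f i = f j → r j i)

/-- The number of strict homomorphisms from `r` to `β`, so that `strictHomCount le (Fin k)` is
`LstrCount le k`. -/
noncomputable def strictHomCount (r : α → α → Prop) (β : Type*) [LE β] : ℕ :=
  Nat.card {f : α → β // IsStrictHom r f}

/-- The number of surjective strict homomorphisms from `r` to `β`, so that
`surjStrictHomCount le (Fin k)` is `WstrCount le k`. -/
noncomputable def surjStrictHomCount (r : α → α → Prop) (β : Type*) [LE β] : ℕ :=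
  Nat.card {f : α → β // f.Surjective ∧ IsStrictHom r f}

theorem isStrictHom_orderEmbedding_comp_iff [Preorder β] [Preorder γ] (r : α → α → Prop)
    (e : β ↪o γ) (f : α → β) : IsStrictHom r (e ∘ f) ↔ IsStrictHom r f := by
  simp [IsStrictHom]

theorem card_isStrictHom_range_eq [Preorder β] [Preorder γ] (r : α → α → Prop)
    (e : β ↪o γ) :
    Nat.card {f : α → γ // IsStrictHom r f ∧ Set.range f = Set.range e} =
      surjStrictHomCount r β := by
  have range_comp_iff (g : α → β) : Set.range (e ∘ g) = Set.range e ↔ g.Surjective := by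
    rw [Set.range_comp, ← Set.image_univ (f := e), e.injective.image_injective.eq_iff,
      Set.range_eq_univ]
  symm
  refine Nat.card_congr (Equiv.ofBijective (fun g ↦ ⟨e ∘ g.1,
    (isStrictHom_orderEmbedding_comp_iff r e g).2 g.2.2, (range_comp_iff g).2 g.2.1⟩) ⟨?_, ?_⟩)
  · exact fun g g' h ↦ Subtype.ext (e.injective.comp_left (congrArg Subtype.val h))
  · rintro ⟨f, hf, hrange⟩
    obtain ⟨g, rfl⟩ := Set.range_subset_range_iff_exists_comp.1 hrange.subset
    exact ⟨⟨g, (range_comp_iff g).1 hrange, (isStrictHom_orderEmbedding_comp_iff r e g).1 hf⟩, rfl⟩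

section Counting

variable [Fintype α]

theorem card_isStrictHom_image_eq [LinearOrder β] (r : α → α → Prop) (S : Finset β) :
    Nat.card {f : α → β // IsStrictHom r f ∧ Finset.univ.image f = S} =
      surjStrictHomCount r (Fin S.card) := by
  rw [← card_isStrictHom_range_eq r (S.orderEmbOfFin rfl), Finset.range_orderEmbOfFin]
  simp only [← Finset.coe_inj, Finset.coe_image, Finset.coe_univ, Set.image_univ]

theorem card_isStrictHom_card_image_eq [LinearOrder β] [Fintype β] (r : α → α → Prop) (i : ℕ) :
    Nat.card {f : α → β // IsStrictHom r f ∧ (Finset.univ.image f).card = i} =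
      (Fintype.card β).choose i * surjStrictHomCount r (Fin i) := by
  classical
  rw [Nat.card_eq_fintype_card, Fintype.card_subtype,
    Finset.card_eq_sum_card_fiberwise (f := fun f ↦ Finset.univ.image f)
      (t := Finset.univ.powersetCard i) (fun f hf ↦ by simpa using (Finset.mem_filter.1 hf).2.2),
    ← Finset.card_univ, ← Finset.card_powersetCard, ← smul_eq_mul]
  refine Finset.sum_eq_card_nsmul fun S hS ↦ ?_
  obtain rfl := (Finset.mem_powersetCard.1 hS).2
  rw [← card_isStrictHom_image_eq, Nat.card_eq_fintype_card, Fintype.card_subtype,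
    Finset.filter_filter]
  exact congrArg Finset.card (Finset.filter_congr (by grind))

theorem strictHomCount_eq_sum_choose_mul [LinearOrder β] [Fintype β] (r : α → α → Prop) :
    strictHomCount r β = ∑ i ∈ Finset.range (Fintype.card α + 1),
      (Fintype.card β).choose i * surjStrictHomCount r (Fin i) := by
  classical
  rw [strictHomCount, Nat.card_eq_fintype_card, Fintype.card_subtype,
    Finset.card_eq_sum_card_fiberwise (f := fun f ↦ (Finset.univ.image f).card)
      (t := Finset.range (Fintype.card α + 1))
      (fun f _ ↦ by simpa [Nat.lt_succ_iff] using Finset.card_image_le (s := Finset.univ) (f := f))]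
  refine Finset.sum_congr rfl fun i _ ↦ ?_
  rw [← card_isStrictHom_card_image_eq, Nat.card_eq_fintype_card, Fintype.card_subtype,
    Finset.filter_filter]

end Counting

theorem surjStrictHomCount_eq_zero_of_isEmpty [Nonempty α] [LE β] [IsEmpty β] (r : α → α → Prop) :
    surjStrictHomCount r β = 0 :=
  Nat.card_of_isEmpty

theorem hilb_eval_natCast (i k : ℕ) : (Hilb i).eval (k : ℚ) = k.choose i := by
  rw [Hilb, eval_mul, eval_C, descPochhammer_eval_eq_descFactorial,
    Nat.descFactorial_eq_factorial_mul_choose, Nat.cast_mul,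
    inv_mul_cancel_left₀ (Nat.cast_ne_zero.2 i.factorial_ne_zero)]

theorem eq_of_forall_eval_natCast_eq {R : Type*} [CommRing R] [IsDomain R] [CharZero R]
    {p q : R[X]} (h : ∀ k : ℕ, p.eval (k : R) = q.eval (k : R)) : p = q :=
  eq_of_infinite_eval_eq p q <| (Set.infinite_range_of_injective Nat.cast_injective).mono <|
    Set.range_subset_iff.2 h

section StrictEhrhart

variable [Fintype α] (r : α → α → Prop)

/-- The strict Ehrhart polynomial `ehr^str`. The summation starts at `0` rather than `1`, so that
it has the right value for empty `α` as well. -/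
noncomputable def strictEhrhart : ℚ[X] :=
  ∑ i ∈ Finset.range (Fintype.card α + 1), (surjStrictHomCount r (Fin i) : ℚ) • Hilb i

theorem strictEhrhart_eval_natCast (k : ℕ) :
    (strictEhrhart r).eval (k : ℚ) = strictHomCount r (Fin k) := by
  simp [strictEhrhart, strictHomCount_eq_sum_choose_mul, eval_finsetSum, hilb_eval_natCast,
    mul_comm]

theorem eq_strictEhrhart {p : ℚ[X]} (hp : ∀ k : ℕ, p.eval (k : ℚ) = strictHomCount r (Fin k)) :
    p = strictEhrhart r :=
  eq_of_forall_eval_natCast_eq fun k ↦ by rw [hp, strictEhrhart_eval_natCast]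

theorem strictEhrhart_eq_sum_Icc [Nonempty α] :
    strictEhrhart r =
      ∑ i ∈ Finset.Icc 1 (Fintype.card α), (surjStrictHomCount r (Fin i) : ℚ) • Hilb i := by
  rw [strictEhrhart, Finset.sum_range_eq_add_Ico _ (Nat.add_one_pos _),
    surjStrictHomCount_eq_zero_of_isEmpty, Nat.cast_zero, zero_smul, zero_add,
    Finset.Ico_add_one_right_eq_Icc]

theorem ehr_str_exists_unique_general :
    (∃! p : ℚ[X], ∀ k : ℕ, p.eval (k : ℚ) = strictHomCount r (Fin k)) ∧
    (Nonempty α → ∀ p : ℚ[X], (∀ k : ℕ, p.eval (k : ℚ) = strictHomCount r (Fin k)) →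
      p = ∑ i ∈ Finset.Icc 1 (Fintype.card α), (surjStrictHomCount r (Fin i) : ℚ) • Hilb i) :=
  ⟨⟨strictEhrhart r, strictEhrhart_eval_natCast r, fun _ hp ↦ eq_strictEhrhart r hp⟩,
    fun _ _ hp ↦ (eq_strictEhrhart r hp).trans (strictEhrhart_eq_sum_Icc r)⟩

end StrictEhrhart

/-- Existence and uniqueness of the strict Ehrhart polynomial `ehr^str_P`, and its
expansion in the Hilbert basis. -/
theorem ehr_str_exists_unique {n : ℕ} (le : Fin n → Fin n → Prop)
    (hrefl : ∀ i, le i i)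
    (htrans : ∀ i j k, le i j → le j k → le i k) :
    (∃! p : ℚ[X], ∀ k : ℕ, p.eval (k : ℚ) = LstrCount le k) ∧
    (1 ≤ n → ∀ p : ℚ[X], (∀ k : ℕ, p.eval (k : ℚ) = LstrCount le k) →
      p = ∑ i ∈ Finset.Icc 1 n, (WstrCount le i : ℚ) • Hilb i) := by
  have h := ehr_str_exists_unique_general le
  rw [Fintype.card_fin] at h
  exact ⟨h.1, fun hn ↦ h.2 ⟨⟨0, hn⟩⟩⟩
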